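/- arXiv:2012.03054 — 3 statements merged into one kernel-verified Lean document; each statement's English description precedes it below -/
import Mathlib

section
/- Let ({f_n},{τ_n}) be a p-ASF for X with analysis operator θ_f. Suppose {g_n} is a sequence in X* such that there exist r,s,t ≥ 0 with s < 1 and ‖Σ_{n=1}^m (f_n−g_n)(x) e_n‖ ≤ r‖Σ_{n=1}^m f_n(x) e_n‖ + t‖x‖ + s‖Σ_{n=1}^m g_n(x) e_n‖ for all x ∈ X and all m ∈ ℕ. Then the map θ_g : X → ℓ^p(ℕ), x ↦ {g_n(x)}_n, is a well-defined bounded linear operator with ‖θ_g‖ ≤ ((1+r)/(1−s))‖θ_f‖ + t/(1−s). -/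
/-!
Write `Pₘ c = ∑_{n < m} cₙ eₙ` for the truncation of a scalar sequence `c`. The triangle inequality
and the perturbation condition give
`‖Pₘ (gₙ x)‖ ≤ ‖Pₘ (fₙ x)‖ + ‖Pₘ ((fₙ - gₙ) x)‖ ≤ (1 + r) ‖Pₘ (fₙ x)‖ + t ‖x‖ + s ‖Pₘ (gₙ x)‖`,
and since `s < 1` and `‖Pₘ (fₙ x)‖ ≤ ‖θf‖ ‖x‖`, the last term can be absorbed on the left, so that
`‖Pₘ (gₙ x)‖ ≤ K ‖x‖` uniformly in `m`, with `K = (1 + r) / (1 - s) * ‖θf‖ + t / (1 - s)`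
(`norm_trunc_le`). For `p < ∞` a sequence whose truncations are bounded by `C` lies in the `p`-ball
of radius `C` (`sum_rpow_le_of_trunc_le`), which yields both membership in `ℓ^p` and the norm bound.
-/


open Filter Topology
open scoped ENNReal

/-- A bound on the initial truncations of a sequence bounds all its finite `p`-power sums, because
every finite set of indices lies in an initial segment. -/
theorem sum_rpow_le_of_trunc_le {𝕂 : Type*} [RCLike 𝕂] {p : ℝ≥0∞} [Fact (1 ≤ p)]
    (hp : 0 < p.toReal) (c : ℕ → 𝕂) {C : ℝ}
    (h : ∀ m, ‖∑ n ∈ Finset.range m, lp.single (E := fun _ : ℕ => 𝕂) p n (c n)‖ ≤ C)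
    (u : Finset ℕ) : ∑ n ∈ u, ‖c n‖ ^ p.toReal ≤ C ^ p.toReal := by
  obtain ⟨m, hm⟩ := u.exists_nat_subset_range
  calc ∑ n ∈ u, ‖c n‖ ^ p.toReal
      ≤ ∑ n ∈ Finset.range m, ‖c n‖ ^ p.toReal :=
        Finset.sum_le_sum_of_subset_of_nonneg hm fun _ _ _ => by positivity
    _ = ‖∑ n ∈ Finset.range m, lp.single (E := fun _ : ℕ => 𝕂) p n (c n)‖ ^ p.toReal :=
        (lp.norm_sum_single (E := fun _ : ℕ => 𝕂) hp c _).symm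
    _ ≤ C ^ p.toReal := by
        gcongr
        exact h m

/-- Truncation is a contraction of `ℓ^p`. -/
theorem norm_trunc_le_norm {𝕂 : Type*} [RCLike 𝕂] {p : ℝ≥0∞} [Fact (1 ≤ p)]
    (hp : 0 < p.toReal) (c : lp (fun _ : ℕ => 𝕂) p) (m : ℕ) :
    ‖∑ n ∈ Finset.range m, lp.single (E := fun _ : ℕ => 𝕂) p n (c n)‖ ≤ ‖c‖ := by
  rw [← Real.rpow_le_rpow_iff (norm_nonneg _) (norm_nonneg _) hp,
    lp.norm_sum_single (E := fun _ : ℕ => 𝕂) hp (fun n => c n)]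
  exact lp.sum_rpow_le_norm_rpow hp c _

/-- With `a` and `b` the truncations of `(fₙ x)` and `(gₙ x)` and `y = ‖x‖`, this is the uniform bound
on truncations, obtained by absorbing `s * ‖b‖` on the left. -/
theorem norm_trunc_le {V : Type*} [SeminormedAddCommGroup V] {a b : V} {r s t A y : ℝ}
    (hr : 0 ≤ r) (hs1 : s < 1) (ha : ‖a‖ ≤ A * y)
    (h : ‖a - b‖ ≤ r * ‖a‖ + t * y + s * ‖b‖) :
    ‖b‖ ≤ ((1 + r) / (1 - s) * A + t / (1 - s)) * y := by
  have hs : 0 < 1 - s := by linarith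
  have htri : ‖b‖ ≤ ‖a‖ + ‖a - b‖ := by
    simpa using norm_sub_le a (a - b)
  have hra : (1 + r) * ‖a‖ ≤ (1 + r) * (A * y) := by gcongr
  have e : ((1 + r) / (1 - s) * A + t / (1 - s)) * y = ((1 + r) * (A * y) + t * y) / (1 - s) := by
    field_simp
  rw [e, le_div_iff₀ hs]
  linarith

/-- If `(f, τ)` is a p-ASF for `X` with analysis operator `θf`, and `g` is a sequence in `X*`
satisfying the perturbation condition with `s < 1`, then the analysis map
`θg : x ↦ (g n x)ₙ` is a well-defined bounded linear operator with
`‖θg‖ ≤ (1+r)/(1−s)·‖θf‖ + t/(1−s)`. -/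
theorem perturbed_analysis_operator_bounded
    (𝕂 : Type*) [RCLike 𝕂] (X : Type*) [NormedAddCommGroup X] [NormedSpace 𝕂 X]
    [CompleteSpace X] [TopologicalSpace.SeparableSpace X]
    (p : ℝ≥0∞) [Fact (1 ≤ p)] (hp : p ≠ ∞)
    (f g : ℕ → X →L[𝕂] 𝕂) (τ : ℕ → X)
    (θf : X →L[𝕂] lp (fun _ : ℕ => 𝕂) p) (θτ : lp (fun _ : ℕ => 𝕂) p →L[𝕂] X)
    (S : X ≃L[𝕂] X)
    (hθf : ∀ (x : X) (n : ℕ), θf x n = f n x)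
    (hθτ : ∀ c : lp (fun _ : ℕ => 𝕂) p,
      Tendsto (fun m => ∑ n ∈ Finset.range m, c n • τ n) atTop (𝓝 (θτ c)))
    (hS : ∀ x : X, S x = θτ (θf x))
    (r s t : ℝ) (hr : 0 ≤ r) (hs : 0 ≤ s) (ht : 0 ≤ t) (hs1 : s < 1)
    (h1 : ∀ (x : X) (m : ℕ),
      ‖∑ n ∈ Finset.range m, lp.single p n ((f n - g n) x)‖ ≤
        r * ‖∑ n ∈ Finset.range m, lp.single p n (f n x)‖ + t * ‖x‖ +
          s * ‖∑ n ∈ Finset.range m, lp.single p n (g n x)‖) :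
    ∃ θg : X →L[𝕂] lp (fun _ : ℕ => 𝕂) p,
      (∀ (x : X) (n : ℕ), θg x n = g n x) ∧
      ‖θg‖ ≤ (1 + r) / (1 - s) * ‖θf‖ + t / (1 - s) := by
  have hp0 : 0 < p.toReal :=
    ENNReal.toReal_pos (zero_lt_one.trans_le (Fact.out : 1 ≤ p)).ne' hp
  have hs0 : 0 < 1 - s := by linarith
  set K := (1 + r) / (1 - s) * ‖θf‖ + t / (1 - s) with hK
  have hK0 : 0 ≤ K := by positivity
  have hbound (x : X) (m : ℕ) :
      ‖∑ n ∈ Finset.range m, lp.single (E := fun _ : ℕ => 𝕂) p n (g n x)‖ ≤ K * ‖x‖ := by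
    refine norm_trunc_le
      (a := ∑ n ∈ Finset.range m, lp.single (E := fun _ : ℕ => 𝕂) p n (f n x)) hr hs1 ?_ ?_
    · have h := norm_trunc_le_norm hp0 (θf x) m
      simp only [hθf] at h
      exact h.trans (θf.le_opNorm x)
    · have h := h1 x m
      simpa only [sub_apply, lp.single_sub, Finset.sum_sub_distrib] using h
  have hsum (x : X) := sum_rpow_le_of_trunc_le hp0 (fun n => g n x) (hbound x)
  let L : X →ₗ[𝕂] lp (fun _ : ℕ => 𝕂) p :=
    { toFun := fun x => ⟨fun n => g n x, memℓp_gen' (hsum x)⟩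
      map_add' := fun x y => by
        ext n
        exact map_add (g n) x y
      map_smul' := fun c x => by
        ext n
        exact map_smul (g n) c x }
  have hL (x : X) : ‖L x‖ ≤ K * ‖x‖ :=
    lp.norm_le_of_forall_sum_le hp0 (by positivity) (hsum x)
  exact ⟨L.mkContinuous K hL, fun _ _ => rfl, L.mkContinuous_norm_le hK0 hL⟩
end

section
/- Let ({f_n},{τ_n}) be a p-ASF for X with synthesis operator θ_τ. Suppose {ω_n} is a sequence in X such that there exist α,β,γ ≥ 0 with β < 1 and ‖Σ_{n=1}^m c_n(τ_n−ω_n)‖ ≤ α‖Σ_{n=1}^m c_n τ_n‖ + γ(Σ_{n=1}^m |c_n|^p)^{1/p} + β‖Σ_{n=1}^m c_n ω_n‖ for all scalars c_1,…,c_m and all m ∈ ℕ. Then the map θ_ω : ℓ^p(ℕ) → X, {c_n}_n ↦ Σ_{n=1}^∞ c_n ω_n, is a well-defined bounded linear operator with ‖θ_ω‖ ≤ ((1+α)/(1−β))‖θ_τ‖ + γ/(1−β). -/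
/-!
On finitely supported `c`, write `ωₙ = τₙ - (τₙ - ωₙ)`: the perturbation condition gives
`(1 - β) ‖∑ cₙ ωₙ‖ ≤ (1 + α) ‖∑ cₙ τₙ‖ + γ ‖c‖`, and `∑ cₙ τₙ = θτ c` there, so
`‖∑ cₙ ωₙ‖ ≤ K ‖c‖` with `K` the claimed bound (`norm_partial_synthesis_le`). For general `c` the
truncations converge to `c` in `ℓᵖ`, since `p < ∞`, so this estimate applied to differences of
truncations makes the partial sums `∑_{n < m} cₙ ωₙ` Cauchy. Their limit is linear in `c` and
inherits the bound `K ‖c‖`.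
-/

open Filter Topology
open scoped ENNReal

section PerturbedSynthesis

variable {𝕂 : Type*} [RCLike 𝕂] {X : Type*} [NormedAddCommGroup X] [NormedSpace 𝕂 X]
  {p : ℝ≥0∞} [Fact (1 ≤ p)]

/-- The truncation of `c ∈ ℓᵖ` to its first `m` coordinates. -/
noncomputable def lpTrunc (m : ℕ) (c : lp (fun _ : ℕ => 𝕂) p) : lp (fun _ : ℕ => 𝕂) p :=
  ∑ n ∈ Finset.range m, lp.single p n (c n)

theorem lpTrunc_apply (m : ℕ) (c : lp (fun _ : ℕ => 𝕂) p) (k : ℕ) :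
    lpTrunc m c k = if k < m then c k else 0 := by
  rw [lpTrunc, lp.coeFn_sum, Finset.sum_apply]
  simp only [lp.coeFn_single, Finset.sum_pi_single, Finset.mem_range]

theorem pos_toReal (hp : p ≠ ∞) : 0 < p.toReal :=
  ENNReal.toReal_pos (zero_lt_one.trans_le (Fact.out : 1 ≤ p)).ne' hp

theorem norm_lpTrunc (hp : p ≠ ∞) (m : ℕ) (c : lp (fun _ : ℕ => 𝕂) p) :
    ‖lpTrunc m c‖ = (∑ n ∈ Finset.range m, ‖c n‖ ^ p.toReal) ^ (1 / p.toReal) := by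
  have h0 := pos_toReal hp
  rw [← lp.norm_sum_single h0 (fun n => c n) (Finset.range m), one_div,
    Real.rpow_rpow_inv (norm_nonneg _) h0.ne']
  rfl

theorem norm_lpTrunc_le (hp : p ≠ ∞) (m : ℕ) (c : lp (fun _ : ℕ => 𝕂) p) :
    ‖lpTrunc m c‖ ≤ ‖c‖ := by
  have h0 := pos_toReal hp
  rw [norm_lpTrunc hp, one_div, Real.rpow_inv_le_iff_of_pos (by positivity) (norm_nonneg _) h0]
  exact lp.sum_rpow_le_norm_rpow h0 c _

theorem sum_lpTrunc_of_le {m N : ℕ} (h : m ≤ N) (c : lp (fun _ : ℕ => 𝕂) p) (v : ℕ → X) :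
    ∑ n ∈ Finset.range N, lpTrunc m c n • v n = ∑ n ∈ Finset.range m, c n • v n := by
  rw [← Finset.sum_subset (Finset.range_subset_range.2 h)]
  · refine Finset.sum_congr rfl fun n hn => ?_
    rw [lpTrunc_apply, if_pos (Finset.mem_range.1 hn)]
  · intro n _ hn
    rw [lpTrunc_apply, if_neg (by simpa using hn), zero_smul]

theorem synthesis_lpTrunc {τ : ℕ → X} {θτ : lp (fun _ : ℕ => 𝕂) p →L[𝕂] X}
    (hθτ : ∀ c : lp (fun _ : ℕ => 𝕂) p,
      Tendsto (fun m => ∑ n ∈ Finset.range m, c n • τ n) atTop (𝓝 (θτ c)))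
    (m : ℕ) (c : lp (fun _ : ℕ => 𝕂) p) :
    θτ (lpTrunc m c) = ∑ n ∈ Finset.range m, c n • τ n := by
  refine tendsto_nhds_unique (hθτ _) (tendsto_const_nhds.congr' ?_)
  filter_upwards [eventually_ge_atTop m] with N hN
  exact (sum_lpTrunc_of_le hN c τ).symm

/-- The uniform bound on the partial sums of `∑ cₙ ωₙ`, with the constant of the theorem. -/
theorem norm_partial_synthesis_le (hp : p ≠ ∞) {τ ω : ℕ → X}
    {θτ : lp (fun _ : ℕ => 𝕂) p →L[𝕂] X}
    (hθτ : ∀ c : lp (fun _ : ℕ => 𝕂) p,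
      Tendsto (fun m => ∑ n ∈ Finset.range m, c n • τ n) atTop (𝓝 (θτ c)))
    {α β γ : ℝ} (hα : 0 ≤ α) (hγ : 0 ≤ γ) (hβ1 : β < 1)
    (h2 : ∀ (c : ℕ → 𝕂) (m : ℕ),
      ‖∑ n ∈ Finset.range m, c n • (τ n - ω n)‖ ≤
        α * ‖∑ n ∈ Finset.range m, c n • τ n‖ +
          γ * (∑ n ∈ Finset.range m, ‖c n‖ ^ p.toReal) ^ (1 / p.toReal) +
            β * ‖∑ n ∈ Finset.range m, c n • ω n‖)
    (c : lp (fun _ : ℕ => 𝕂) p) (m : ℕ) :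
    ‖∑ n ∈ Finset.range m, c n • ω n‖ ≤
      ((1 + α) / (1 - β) * ‖θτ‖ + γ / (1 - β)) * ‖c‖ := by
  have hβ' : 0 < 1 - β := sub_pos.2 hβ1
  have hc := norm_lpTrunc_le hp m c
  have hpert := h2 c m
  rw [← norm_lpTrunc hp] at hpert
  have hτ : ‖∑ n ∈ Finset.range m, c n • τ n‖ ≤ ‖θτ‖ * ‖c‖ := by
    rw [← synthesis_lpTrunc hθτ]
    exact θτ.le_opNorm_of_le hc
  have htri : ‖∑ n ∈ Finset.range m, c n • ω n‖ ≤
      ‖∑ n ∈ Finset.range m, c n • τ n‖ + ‖∑ n ∈ Finset.range m, c n • (τ n - ω n)‖ := by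
    have h : ∑ n ∈ Finset.range m, c n • ω n =
        ∑ n ∈ Finset.range m, c n • τ n - ∑ n ∈ Finset.range m, c n • (τ n - ω n) := by
      simp [smul_sub]
    rw [h]
    exact norm_sub_le _ _
  have h1 := mul_le_mul_of_nonneg_left hτ (by linarith : 0 ≤ 1 + α)
  have h3 := mul_le_mul_of_nonneg_left hc hγ
  have hK : ((1 + α) / (1 - β) * ‖θτ‖ + γ / (1 - β)) * ‖c‖ =
      ((1 + α) * (‖θτ‖ * ‖c‖) + γ * ‖c‖) / (1 - β) := by
    field_simp
  rw [hK, le_div_iff₀ hβ']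
  linarith

end PerturbedSynthesis

/-- If `(f, τ)` is a p-ASF for `X` with synthesis operator `θτ`, and `ω` is a sequence in `X`
satisfying the perturbation condition with `β < 1`, then the synthesis map
`θω : (cₙ) ↦ Σ cₙ ωₙ` is a well-defined bounded linear operator with
`‖θω‖ ≤ (1+α)/(1−β)·‖θτ‖ + γ/(1−β)`. -/
theorem perturbed_synthesis_operator_bounded
    (𝕂 : Type*) [RCLike 𝕂] (X : Type*) [NormedAddCommGroup X] [NormedSpace 𝕂 X]
    [CompleteSpace X] [TopologicalSpace.SeparableSpace X]
    (p : ℝ≥0∞) [Fact (1 ≤ p)] (hp : p ≠ ∞)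
    (f : ℕ → X →L[𝕂] 𝕂) (τ ω : ℕ → X)
    (θf : X →L[𝕂] lp (fun _ : ℕ => 𝕂) p) (θτ : lp (fun _ : ℕ => 𝕂) p →L[𝕂] X)
    (S : X ≃L[𝕂] X)
    (hθf : ∀ (x : X) (n : ℕ), θf x n = f n x)
    (hθτ : ∀ c : lp (fun _ : ℕ => 𝕂) p,
      Tendsto (fun m => ∑ n ∈ Finset.range m, c n • τ n) atTop (𝓝 (θτ c)))
    (hS : ∀ x : X, S x = θτ (θf x))
    (α β γ : ℝ) (hα : 0 ≤ α) (hβ : 0 ≤ β) (hγ : 0 ≤ γ) (hβ1 : β < 1)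
    (h2 : ∀ (c : ℕ → 𝕂) (m : ℕ),
      ‖∑ n ∈ Finset.range m, c n • (τ n - ω n)‖ ≤
        α * ‖∑ n ∈ Finset.range m, c n • τ n‖ +
          γ * (∑ n ∈ Finset.range m, ‖c n‖ ^ p.toReal) ^ (1 / p.toReal) +
            β * ‖∑ n ∈ Finset.range m, c n • ω n‖) :
    ∃ θω : lp (fun _ : ℕ => 𝕂) p →L[𝕂] X,
      (∀ c : lp (fun _ : ℕ => 𝕂) p,
        Tendsto (fun m => ∑ n ∈ Finset.range m, c n • ω n) atTop (𝓝 (θω c))) ∧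
      ‖θω‖ ≤ (1 + α) / (1 - β) * ‖θτ‖ + γ / (1 - β) := by
  set K : ℝ := (1 + α) / (1 - β) * ‖θτ‖ + γ / (1 - β)
  have hβ' : 0 < 1 - β := sub_pos.2 hβ1
  have hK : 0 ≤ K := by positivity
  have hbound : ∀ (c : lp (fun _ : ℕ => 𝕂) p) (m : ℕ),
      ‖∑ n ∈ Finset.range m, c n • ω n‖ ≤ K * ‖c‖ :=
    norm_partial_synthesis_le hp hθτ hα hγ hβ1 h2
  have hlim : ∀ c : lp (fun _ : ℕ => 𝕂) p,
      ∃ x : X, Tendsto (fun m => ∑ n ∈ Finset.range m, c n • ω n) atTop (𝓝 x) := by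
    intro c
    refine cauchySeq_tendsto_of_complete (Metric.cauchySeq_iff.2 fun ε hε => ?_)
    have hcau : CauchySeq fun m => lpTrunc m c :=
      (lp.hasSum_single hp c).tendsto_sum_nat.cauchySeq
    -- `K + 1` rather than `K`, since `K` may vanish
    obtain ⟨N, hN⟩ := Metric.cauchySeq_iff.1 hcau (ε / (K + 1)) (by positivity)
    refine ⟨N, fun m hm k hk => ?_⟩
    have hd := hN m hm k hk
    rw [dist_eq_norm, lt_div_iff₀ (by positivity)] at hd
    rw [dist_eq_norm]
    -- at index `max m k` the partial sum of the difference of truncations is exactly the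
    -- difference of the `m`-th and `k`-th partial sums
    have hb := hbound (lpTrunc m c - lpTrunc k c) (max m k)
    simp only [lp.coeFn_sub, Pi.sub_apply, sub_smul, Finset.sum_sub_distrib] at hb
    rw [sum_lpTrunc_of_le (le_max_left m k), sum_lpTrunc_of_le (le_max_right m k)] at hb
    nlinarith [norm_nonneg (lpTrunc m c - lpTrunc k c)]
  choose T hT using hlim
  let L : lp (fun _ : ℕ => 𝕂) p →ₗ[𝕂] X :=
    { toFun := T
      map_add' := fun c d => by
        refine tendsto_nhds_unique (hT (c + d)) (((hT c).add (hT d)).congr fun m => ?_)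
        simp [add_smul, Finset.sum_add_distrib]
      map_smul' := fun a c => by
        refine tendsto_nhds_unique (hT (a • c)) (((hT c).const_smul a).congr fun m => ?_)
        simp [Finset.smul_sum, mul_smul] }
  have hL : ∀ c, ‖L c‖ ≤ K * ‖c‖ := fun c =>
    le_of_tendsto (hT c).norm (Eventually.of_forall (hbound c))
  exact ⟨L.mkContinuous K hL, hT, L.mkContinuous_norm_le hK hL⟩
end

section
/- Let X and Y be Banach spaces and U : X → Y a bounded invertible linear operator. If V : X → Y is a bounded linear operator such that there exist α, β ∈ [0,1) with ‖Ux − Vx‖ ≤ α‖Ux‖ + β‖Vx‖ for all x ∈ X, then V is invertible and, for all x ∈ X, ((1−α)/(1+β))‖Ux‖ ≤ ‖Vx‖ ≤ ((1+α)/(1−β))‖Ux‖, and for all y ∈ Y, ((1−β)/(1+α))(1/‖U‖)‖y‖ ≤ ‖V^{-1}y‖ ≤ ((1+β)/(1−α))‖U^{-1}‖‖y‖. -/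
/-!
The hypothesis controls `V - U` uniformly along the segment `T t = U + t (V - U)`, `0 ≤ t ≤ 1`:
since `U x` and `V x` differ from `T t x` by `t (V - U) x` and `(1 - t) (V - U) x` respectively,
`‖V x - U x‖ ≤ C ‖T t x‖` with `C` independent of `t` (`norm_sub_le_segment`). A Neumann series
(`exists_equiv_add`) shows that invertibility of `T s` passes to `T t` whenever `|t - s| C < 1`,
so finitely many steps of equal length lead from `U = T 0` to `V = T 1`. The norm estimates
follow from the triangle inequality.
-/

/-- If `D` is small relative to an invertible `T`, then `T + D = (1 + D T⁻¹) T` is invertible, by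
the Neumann series for `1 + D T⁻¹`. -/
lemma exists_equiv_add {𝕂 X Y : Type*} [RCLike 𝕂]
    [NormedAddCommGroup X] [NormedSpace 𝕂 X]
    [NormedAddCommGroup Y] [NormedSpace 𝕂 Y] [CompleteSpace Y]
    (T : X ≃L[𝕂] Y) (D : X →L[𝕂] Y) (c : ℝ) (hc0 : 0 ≤ c) (hc1 : c < 1)
    (hD : ∀ x, ‖D x‖ ≤ c * ‖T x‖) :
    ∃ W : X ≃L[𝕂] Y, ∀ x, W x = T x + D x := by
  let R : Y →L[𝕂] Y := -(D.comp (T.symm : Y →L[𝕂] X))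
  have hR : ‖R‖ < 1 := by
    refine lt_of_le_of_lt (ContinuousLinearMap.opNorm_le_bound _ hc0 fun y => ?_) hc1
    simpa [R] using hD (T.symm y)
  refine ⟨T.trans (ContinuousLinearEquiv.unitsEquiv 𝕂 Y (Units.oneSub R hR)), fun x => ?_⟩
  simp [R]

/-- The bound on `V - U` along the segment from `U` to `V`, for the values `u = U x`, `v = V x`.
The constant depends only on a common bound `γ` for `α` and `β`, not on `t`. -/
lemma norm_sub_le_segment {𝕂 Y : Type*} [RCLike 𝕂] [NormedAddCommGroup Y] [NormedSpace 𝕂 Y]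
    (u v : Y) {α β γ t : ℝ} (hα0 : 0 ≤ α) (hβ0 : 0 ≤ β) (hα : α ≤ γ) (hβ : β ≤ γ)
    (hγ : γ < 1) (ht0 : 0 ≤ t) (ht1 : t ≤ 1) (h : ‖u - v‖ ≤ α * ‖u‖ + β * ‖v‖) :
    ‖v - u‖ ≤ 2 * γ / (1 - γ) * ‖u + (t : 𝕂) • (v - u)‖ := by
  set w := u + (t : 𝕂) • (v - u) with hw
  have hu : ‖u‖ ≤ ‖w‖ + t * ‖v - u‖ := by
    have e : u = w - (t : 𝕂) • (v - u) := by rw [hw]; abel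
    calc ‖u‖ = ‖w - (t : 𝕂) • (v - u)‖ := by rw [← e]
      _ ≤ ‖w‖ + ‖(t : 𝕂) • (v - u)‖ := norm_sub_le _ _
      _ = _ := by rw [norm_smul, RCLike.norm_ofReal, abs_of_nonneg ht0]
  have hv : ‖v‖ ≤ ‖w‖ + (1 - t) * ‖v - u‖ := by
    have e : v = w + ((1 - t : ℝ) : 𝕂) • (v - u) := by
      rw [hw]; push_cast; module
    calc ‖v‖ = ‖w + ((1 - t : ℝ) : 𝕂) • (v - u)‖ := by rw [← e]
      _ ≤ ‖w‖ + ‖((1 - t : ℝ) : 𝕂) • (v - u)‖ := norm_add_le _ _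
      _ = _ := by rw [norm_smul, RCLike.norm_ofReal, abs_of_nonneg (by linarith)]
  rw [norm_sub_rev] at h
  have h1 : α * ‖u‖ ≤ γ * (‖w‖ + t * ‖v - u‖) :=
    mul_le_mul hα hu (norm_nonneg _) (hα0.trans hα)
  have h2 : β * ‖v‖ ≤ γ * (‖w‖ + (1 - t) * ‖v - u‖) :=
    mul_le_mul hβ hv (norm_nonneg _) (hβ0.trans hβ)
  rw [div_mul_eq_mul_div, le_div_iff₀ (by linarith)]
  linarith

/-- **Hilding-type perturbation theorem (Casazza–Kalton / Casazza–Christensen).**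
Let `X`, `Y` be Banach spaces and `U : X → Y` a bounded invertible operator.  If
`V : X → Y` is a bounded operator such that there are `α, β ∈ [0,1)` with
`‖Ux − Vx‖ ≤ α‖Ux‖ + β‖Vx‖` for all `x`, then `V` is invertible and
`(1−α)/(1+β)·‖Ux‖ ≤ ‖Vx‖ ≤ (1+α)/(1−β)·‖Ux‖` for all `x ∈ X`, while
`(1−β)/(1+α)·(1/‖U‖)·‖y‖ ≤ ‖V⁻¹y‖ ≤ (1+β)/(1−α)·‖U⁻¹‖·‖y‖` for all `y ∈ Y`. -/
theorem hilding_perturbation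
    (𝕂 : Type*) [RCLike 𝕂] (X Y : Type*)
    [NormedAddCommGroup X] [NormedSpace 𝕂 X] [CompleteSpace X]
    [NormedAddCommGroup Y] [NormedSpace 𝕂 Y] [CompleteSpace Y]
    (U : X ≃L[𝕂] Y) (V : X →L[𝕂] Y)
    (α β : ℝ) (hα0 : 0 ≤ α) (hα1 : α < 1) (hβ0 : 0 ≤ β) (hβ1 : β < 1)
    (h : ∀ x : X, ‖U x - V x‖ ≤ α * ‖U x‖ + β * ‖V x‖) :
    ∃ W : X ≃L[𝕂] Y,
      (∀ x : X, W x = V x) ∧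
      (∀ x : X, (1 - α) / (1 + β) * ‖U x‖ ≤ ‖V x‖ ∧
        ‖V x‖ ≤ (1 + α) / (1 - β) * ‖U x‖) ∧
      (∀ y : Y, (1 - β) / (1 + α) * (1 / ‖(U : X →L[𝕂] Y)‖) * ‖y‖ ≤ ‖W.symm y‖ ∧
        ‖W.symm y‖ ≤ (1 + β) / (1 - α) * ‖(U.symm : Y →L[𝕂] X)‖ * ‖y‖) := by
  obtain ⟨W, hW⟩ : ∃ W : X ≃L[𝕂] Y, ∀ x, W x = V x := by
    set γ := max α β
    have hγ1 : γ < 1 := max_lt hα1 hβ1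
    have hγ0 : 0 ≤ γ := hα0.trans (le_max_left _ _)
    set C := 2 * γ / (1 - γ)
    have hC : 0 ≤ C := div_nonneg (by linarith) (by linarith)
    obtain ⟨n, hn⟩ := exists_nat_gt C
    have hn0 : (0 : ℝ) < n := hC.trans_lt hn
    have key : ∀ k : ℕ, k ≤ n →
        ∃ W : X ≃L[𝕂] Y, ∀ x, W x = U x + ((k / n : ℝ) : 𝕂) • (V x - U x) := by
      intro k
      induction k with
      | zero => exact fun _ => ⟨U, fun x => by simp⟩
      | succ k ih =>
        intro hk
        obtain ⟨T, hT⟩ := ih (by omega)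
        have hk' : (k : ℝ) ≤ n := by exact_mod_cast (by omega : k ≤ n)
        obtain ⟨W, hW⟩ := exists_equiv_add T
          (((1 / n : ℝ) : 𝕂) • (V - (U : X →L[𝕂] Y))) (C / n) (by positivity)
          ((div_lt_one hn0).2 hn) (fun x => by
            have hb := norm_sub_le_segment (𝕂 := 𝕂) (U x) (V x) hα0 hβ0 (le_max_left α β)
              (le_max_right α β) hγ1 (t := k / n) (by positivity)
              ((div_le_one hn0).2 hk') (h x)
            rw [← hT x] at hb
            have : ‖(((1 / n : ℝ) : 𝕂) • (V - (U : X →L[𝕂] Y))) x‖ = 1 / n * ‖V x - U x‖ := by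
              change ‖((1 / n : ℝ) : 𝕂) • (V x - U x)‖ = _
              rw [norm_smul, RCLike.norm_ofReal, abs_of_nonneg (by positivity)]
            rw [this]
            calc 1 / n * ‖V x - U x‖ ≤ 1 / n * (C * ‖T x‖) := by gcongr
              _ = C / n * ‖T x‖ := by ring)
        refine ⟨W, fun x => ?_⟩
        rw [hW, hT]
        change _ + ((1 / n : ℝ) : 𝕂) • (V x - U x) = _
        rw [add_assoc, ← add_smul, ← RCLike.ofReal_add, ← add_div]
        push_cast
        rfl
    obtain ⟨W, hW⟩ := key n le_rfl
    refine ⟨W, fun x => ?_⟩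
    rw [hW, div_self hn0.ne']
    simp
  have hVU : ∀ x : X, (1 - α) / (1 + β) * ‖U x‖ ≤ ‖V x‖ ∧
      ‖V x‖ ≤ (1 + α) / (1 - β) * ‖U x‖ := by
    intro x
    have h1 := norm_sub_norm_le (U x) (V x)
    have h2 := norm_sub_norm_le (V x) (U x)
    rw [norm_sub_rev] at h2
    have h3 := h x
    constructor
    · rw [div_mul_eq_mul_div, div_le_iff₀ (by linarith)]
      linarith
    · rw [div_mul_eq_mul_div, le_div_iff₀ (by linarith)]
      linarith
  refine ⟨W, hW, hVU, fun y => ?_⟩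
  obtain ⟨x, rfl⟩ := W.surjective y
  rw [W.symm_apply_apply, hW]
  obtain ⟨hlo, hhi⟩ := hVU x
  have ha : 0 < 1 - α := by linarith
  have hb : 0 < 1 - β := by linarith
  constructor
  · have hU : ‖U x‖ ≤ ‖(U : X →L[𝕂] Y)‖ * ‖x‖ := (U : X →L[𝕂] Y).le_opNorm x
    have h1 : (1 - β) / (1 + α) * ‖V x‖ ≤ ‖U x‖ := by
      rw [div_mul_eq_mul_div, le_div_iff₀ hb] at hhi
      rw [div_mul_eq_mul_div, div_le_iff₀ (by linarith)]
      linarith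
    -- If `‖U‖ = 0`, the convention `1 / 0 = 0` makes the left-hand side vanish.
    calc (1 - β) / (1 + α) * (1 / ‖(U : X →L[𝕂] Y)‖) * ‖V x‖
        = (1 - β) / (1 + α) * ‖V x‖ / ‖(U : X →L[𝕂] Y)‖ := by ring
      _ ≤ ‖x‖ := div_le_of_le_mul₀ (norm_nonneg _) (norm_nonneg _)
          (by rw [mul_comm ‖x‖]; exact h1.trans hU)
  · have hU : ‖x‖ ≤ ‖(U.symm : Y →L[𝕂] X)‖ * ‖U x‖ := by
      simpa using (U.symm : Y →L[𝕂] X).le_opNorm (U x)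
    have h1 : ‖U x‖ ≤ (1 + β) / (1 - α) * ‖V x‖ := by
      rw [div_mul_eq_mul_div, div_le_iff₀ (by linarith)] at hlo
      rw [div_mul_eq_mul_div, le_div_iff₀ ha]
      linarith
    calc ‖x‖ ≤ ‖(U.symm : Y →L[𝕂] X)‖ * ‖U x‖ := hU
      _ ≤ ‖(U.symm : Y →L[𝕂] X)‖ * ((1 + β) / (1 - α) * ‖V x‖) := by gcongr
      _ = _ := by ring
end
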